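/- arXiv:1308.1892 — 2 statements merged into one kernel-verified Lean document; each statement's English description precedes it below -/
import Mathlib

section
/- Let C be a quasiminimal pregeometry class, H, H' ∈ C, let G ⊆ H and G' ⊆ H' be countable closed or empty, let g : G → G' be an isomorphism, and let g ∪ f : H ⇀ H' be a partial embedding with X = dom(f) and X' = img(f) finite. Then g ∪ f extends to an isomorphism ĝ : cl(X ∪ G) → cl(X' ∪ G'). -/
open FirstOrder FirstOrder.Language Set Cardinal



universe u u' v w

namespace QM

variable {L : FirstOrder.Language.{v, w}}

/-- Formulas of `L_{ω₁,ω}`: built from atomic formulas by negation, countable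
conjunction (indexed by `ℕ`), and universal quantification; `α` is the type of free
variables and `n` counts the de Bruijn bound variables. Countable disjunctions and
the existential quantifier are definable via negation. -/
inductive InfFormula (L : FirstOrder.Language.{v, w}) (α : Type u) : ℕ → Type (max u v w)
  | falsum {n : ℕ} : InfFormula L α n
  | equal {n : ℕ} (t₁ t₂ : L.Term (α ⊕ (Fin n))) : InfFormula L α n
  | rel {n l : ℕ} (R : L.Relations l) (ts : Fin l → L.Term (α ⊕ (Fin n))) : InfFormula L α n
  | not {n : ℕ} (φ : InfFormula L α n) : InfFormula L α n
  | iInf {n : ℕ} (φ : ℕ → InfFormula L α n) : InfFormula L α n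
  | all {n : ℕ} (φ : InfFormula L α (n + 1)) : InfFormula L α n

/-- Satisfaction of an `L_{ω₁,ω}`-formula in an `L`-structure `M`, given an
assignment `v` of the free variables and `xs` of the bound variables. -/
def InfFormula.Realize {M : Type u'} [L.Structure M] {α : Type u} :
    ∀ {n : ℕ}, InfFormula L α n → (α → M) → (Fin n → M) → Prop
  | _, .falsum, _, _ => False
  | _, .equal t₁ t₂, v, xs => t₁.realize (Sum.elim v xs) = t₂.realize (Sum.elim v xs)
  | _, .rel R ts, v, xs => Structure.RelMap R (fun i => (ts i).realize (Sum.elim v xs))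
  | _, .not φ, v, xs => ¬ φ.Realize v xs
  | _, .iInf φ, v, xs => ∀ i : ℕ, (φ i).Realize v xs
  | _, .all φ, v, xs => ∀ x : M, φ.Realize v (Fin.snoc xs x)

/-- An `L_{ω₁,ω}`-sentence. -/
abbrev InfSentence (L : FirstOrder.Language.{v, w}) := InfFormula L PEmpty 0

/-- Satisfaction of an `L_{ω₁,ω}`-sentence. -/
def InfSentence.RealizeS (M : Type u') [L.Structure M] (φ : InfSentence L) : Prop :=
  InfFormula.Realize (M := M) φ PEmpty.elim (fun i => i.elim0)

/-- Satisfaction of an `L_{ω₁,ω}`-formula with parameters from the set `A`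
and `m` free variables `v̄`, at the tuple `v`. -/
def InfFormula.RealizeP {M : Type u'} [L.Structure M] {A : Set M} {m : ℕ}
    (φ : InfFormula L (↥A ⊕ Fin m) 0) (v : Fin m → M) : Prop :=
  φ.Realize (Sum.elim Subtype.val v) (fun i => i.elim0)

/-- The domain of a partial map, viewed as a graph (set of pairs). -/
def pdom {H : Type*} {H' : Type*} (p : Set (H × H')) : Set H := Prod.fst '' p

/-- The image of a partial map, viewed as a graph (set of pairs). -/
def pimg {H : Type*} {H' : Type*} (p : Set (H × H')) : Set H' := Prod.snd '' p

/-- The image of a set `X` under a partial map given as a graph. -/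
def pimage {H : Type*} {H' : Type*} (p : Set (H × H')) (X : Set H) : Set H' :=
  {b | ∃ a ∈ X, (a, b) ∈ p}

/-- A partial map (given as its graph `p`) is a partial embedding if it preserves
quantifier-free first-order formulas. (This forces `p` to be the graph of an
injective partial function.) -/
def IsPartialEmbedding {H : Type u} {H' : Type u} [L.Structure H] [L.Structure H']
    (p : Set (H × H')) : Prop :=
  ∀ (n : ℕ) (φ : L.Formula (Fin n)), BoundedFormula.IsQF φ →
    ∀ (a : Fin n → H) (b : Fin n → H'), (∀ i, (a i, b i) ∈ p) →
      (φ.Realize a ↔ φ.Realize b)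

/-- A partial map is a σ-embedding if it is a partial embedding and preserves all
`L_{ω₁,ω}`-formulas with (possibly infinitely many) parameters from its domain;
equivalently `⟨M, m⟩_{m ∈ dom p} ≡_{ω₁,ω} ⟨N, p(m)⟩_{m ∈ dom p}`. -/
def IsSigmaEmbedding {H : Type u} {H' : Type u} [L.Structure H] [L.Structure H']
    (p : Set (H × H')) : Prop :=
  IsPartialEmbedding (L := L) p ∧
    ∀ (φ : InfFormula L (↥(pdom p)) 0) (b : ↥(pdom p) → H'),
      (∀ x : ↥(pdom p), ((x : H), b x) ∈ p) →
        (φ.Realize Subtype.val (fun i => i.elim0) ↔ φ.Realize b (fun i => i.elim0))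

/-- A pregeometry (combinatorial geometry) on a set. -/
structure IsPregeometry {α : Type*} (cl : Set α → Set α) : Prop where
  subset_cl : ∀ X, X ⊆ cl X
  mono : ∀ ⦃X Y : Set α⦄, X ⊆ Y → cl X ⊆ cl Y
  idem : ∀ X, cl (cl X) = cl X
  finChar : ∀ (X : Set α) (y : α), y ∈ cl X → ∃ F : Finset α, ↑F ⊆ X ∧ y ∈ cl ↑F
  exchange : ∀ (X : Set α) (a b : α), a ∈ cl (X ∪ {b}) → a ∉ cl X → b ∈ cl (X ∪ {a})

/-- A pair `⟨H, cl_H⟩` of an `L`-structure and a closure operator on it. -/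
structure QMObj (L : FirstOrder.Language.{v, w}) where
  carrier : Type u
  [str : L.Structure carrier]
  cl : Set carrier → Set carrier

attribute [instance] QMObj.str

/-- `G` is countable and closed, or empty. -/
def CCOE (H : QMObj.{u} L) (G : Set H.carrier) : Prop :=
  (G.Countable ∧ H.cl G = G) ∨ G = ∅

/-- The axioms for a class of pairs `⟨H, cl_H⟩` to be a quasiminimal pregeometry class. -/
structure IsQMClass (C : Set (QMObj.{u} L)) : Prop where
  /-- Closure under isomorphisms, transporting the closure operator. -/
  iso_closed : ∀ H ∈ C, ∀ (N : Type u) [_iN : L.Structure N] (f : H.carrier ≃[L] N),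
      (⟨N, fun X => f '' (H.cl (f ⁻¹' X))⟩ : QMObj L) ∈ C
  /-- Any two members satisfy the same quantifier-free sentences. -/
  qf_theory : ∀ H ∈ C, ∀ H' ∈ C, ∀ (φ : L.Sentence), BoundedFormula.IsQF φ →
      (H.carrier ⊨ φ ↔ H'.carrier ⊨ φ)
  /-- Each `cl_H` is a pregeometry. -/
  pregeom : ∀ H ∈ C, IsPregeometry H.cl
  /-- The closure of a finite set is countable. -/
  cl_finite_countable : ∀ H ∈ C, ∀ X : Set H.carrier, X.Finite → (H.cl X).Countable
  /-- The closure of any set is (the underlying set of) a substructure which, with the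
  restricted closure operator, is again a member of the class. -/
  cl_mem : ∀ H ∈ C, ∀ X : Set H.carrier, ∃ S : L.Substructure H.carrier,
      (S : Set H.carrier) = H.cl X ∧
      (⟨↥S, fun Y => Subtype.val ⁻¹' (H.cl (Subtype.val '' Y))⟩ : QMObj L) ∈ C
  /-- Partial embeddings preserve and reflect the closure relation. -/
  cl_embedding : ∀ H ∈ C, ∀ H' ∈ C, ∀ (p : Set (H.carrier × H'.carrier)),
      IsPartialEmbedding (L := L) p → ∀ X ⊆ pdom p, ∀ (y : H.carrier) (y' : H'.carrier),
        (y, y') ∈ p → (y ∈ H.cl X ↔ y' ∈ H'.cl (pimage p X))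
  /-- ℵ₀-homogeneity over countable closed models, part (i): an isomorphism between
  countable closed (or empty) sets extends by any pair of independent points. -/
  homogeneity₁ : ∀ H ∈ C, ∀ H' ∈ C, ∀ (g : Set (H.carrier × H'.carrier)),
      CCOE H (pdom g) → CCOE H' (pimg g) → IsPartialEmbedding (L := L) g →
      ∀ (x : H.carrier) (x' : H'.carrier), x ∉ H.cl (pdom g) → x' ∉ H'.cl (pimg g) →
        IsPartialEmbedding (L := L) (g ∪ {(x, x')})
  /-- ℵ₀-homogeneity over countable closed models, part (ii). -/
  homogeneity₂ : ∀ H ∈ C, ∀ H' ∈ C, ∀ (g f : Set (H.carrier × H'.carrier)),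
      CCOE H (pdom g) → CCOE H' (pimg g) → IsPartialEmbedding (L := L) g →
      (pdom f).Finite → IsPartialEmbedding (L := L) (g ∪ f) →
      ∀ y ∈ H.cl (pdom f ∪ pdom g), ∃ y' : H'.carrier,
        IsPartialEmbedding (L := L) (g ∪ f ∪ {(y, y')})


/-- `p` is a σ-type over `A` in `m` variables: every countable subset of `p` is
consistent with the structure, i.e. simultaneously satisfiable. -/
def IsSigmaType {M : Type u'} [L.Structure M] {A : Set M} {m : ℕ}
    (p : Set (InfFormula L (↥A ⊕ Fin m) 0)) : Prop :=
  ∀ Φ ⊆ p, Φ.Countable → ∃ v : Fin m → M, ∀ φ ∈ Φ, φ.RealizeP v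

/-- A σ-type `p` is isolated if there is a consistent `L_{ω₁,ω}`-formula `ψ(x̄)`
(possibly with parameters from `M`) such that `ψ` implies every formula of `p`. -/
def IsIsolated {M : Type u'} [L.Structure M] {A : Set M} {m : ℕ}
    (p : Set (InfFormula L (↥A ⊕ Fin m) 0)) : Prop :=
  ∃ ψ : InfFormula L (M ⊕ Fin m) 0,
    (∃ v : Fin m → M, ψ.Realize (Sum.elim id v) (fun i => i.elim0)) ∧
    ∀ φ ∈ p, ∀ v : Fin m → M, ψ.Realize (Sum.elim id v) (fun i => i.elim0) → φ.RealizeP v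

/-- A σ-type `p` is realised if some tuple satisfies every formula of `p`. -/
def IsRealized {M : Type u'} [L.Structure M] {A : Set M} {m : ℕ}
    (p : Set (InfFormula L (↥A ⊕ Fin m) 0)) : Prop :=
  ∃ v : Fin m → M, ∀ φ ∈ p, φ.RealizeP v

/-- `B` is an independent subset of the pregeometry `⟨H, cl_H⟩`. -/
def IsIndep (H : QMObj.{u} L) (B : Set H.carrier) : Prop :=
  ∀ x ∈ B, x ∉ H.cl (B \ {x})

/-- `B` is a basis of the pregeometry `⟨H, cl_H⟩`: a maximal independent subset. -/
def IsBasis (H : QMObj.{u} L) (B : Set H.carrier) : Prop :=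
  IsIndep H B ∧ ∀ B' : Set H.carrier, B ⊆ B' → IsIndep H B' → B' = B

/-- The model-theoretic algebraic closure of `X` in `M`: the set of elements
satisfying some first-order formula with parameters in `X` having finitely many
solutions. -/
def aclS (L : FirstOrder.Language.{v, w}) (M : Type u) [L.Structure M] (X : Set M) :
    Set M :=
  {y | ∃ (n : ℕ) (φ : L.BoundedFormula (Fin n) 1) (v : Fin n → M),
    (∀ i, v i ∈ X) ∧ φ.Realize v ![y] ∧ {z : M | φ.Realize v ![z]}.Finite}


/-- The inverse of a partial map. -/
def pinv {H : Type*} {H' : Type*} (p : Set (H × H')) : Set (H' × H) := Prod.swap ⁻¹' p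

theorem mem_pinv {H : Type*} {H' : Type*} (p : Set (H × H')) (a : H) (b : H') :
    (b, a) ∈ pinv p ↔ (a, b) ∈ p := Iff.rfl

theorem pdom_pinv {H : Type*} {H' : Type*} (p : Set (H × H')) : pdom (pinv p) = pimg p := by
  ext b
  constructor
  · rintro ⟨⟨b', a⟩, h, rfl⟩
    exact ⟨(a, b'), h, rfl⟩
  · rintro ⟨⟨a, b'⟩, h, rfl⟩
    exact ⟨(b', a), h, rfl⟩

theorem pimg_pinv {H : Type*} {H' : Type*} (p : Set (H × H')) : pimg (pinv p) = pdom p := by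
  ext b
  constructor
  · rintro ⟨⟨b', a⟩, h, rfl⟩
    exact ⟨(a, b'), h, rfl⟩
  · rintro ⟨⟨a, b'⟩, h, rfl⟩
    exact ⟨(b', a), h, rfl⟩

theorem pdom_union {H : Type*} {H' : Type*} (p q : Set (H × H')) :
    pdom (p ∪ q) = pdom p ∪ pdom q := Set.image_union _ _ _

theorem pimg_union {H : Type*} {H' : Type*} (p q : Set (H × H')) :
    pimg (p ∪ q) = pimg p ∪ pimg q := Set.image_union _ _ _

theorem IsPartialEmbedding.pinv {H : Type u} {H' : Type u} [L.Structure H] [L.Structure H']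
    {p : Set (H × H')} (h : IsPartialEmbedding (L := L) p) :
    IsPartialEmbedding (L := L) (pinv p) :=
  fun n φ hφ a b hab => (h n φ hφ b a hab).symm

theorem IsPartialEmbedding.functional {H : Type u} {H' : Type u} [L.Structure H]
    [L.Structure H'] {p : Set (H × H')} (h : IsPartialEmbedding (L := L) p)
    {a : H} {b c : H'} (hb : (a, b) ∈ p) (hc : (a, c) ∈ p) : b = c := by
  have := h 2 (Term.equal (Term.var 0) (Term.var 1))
    (BoundedFormula.IsAtomic.equal _ _).isQF ![a, a] ![b, c]
    (by intro i; fin_cases i <;> simpa)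
  simpa using this

theorem mem_cl_of_ext {C : Set (QMObj.{u} L)} (hC : IsQMClass C) {H H' : QMObj.{u} L}
    (hH : H ∈ C) (hH' : H' ∈ C) {q : Set (H.carrier × H'.carrier)} {y : H.carrier}
    {y' : H'.carrier} (h : IsPartialEmbedding (L := L) (q ∪ {(y, y')}))
    (hy : y ∈ H.cl (pdom q)) : y' ∈ H'.cl (pimg q) := by
  have h1 := (hC.cl_embedding H hH H' hH' _ h (pdom q)
    (by rw [pdom_union]; exact subset_union_left) y y' (Or.inr rfl)).1 hy
  refine (hC.pregeom H' hH').mono ?_ h1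
  rintro b ⟨a, ⟨⟨a', c⟩, hc, rfl⟩, hab⟩
  have : b = c := h.functional hab (Or.inl hc)
  subst this
  exact ⟨_, hc, rfl⟩

theorem cl_countable {C : Set (QMObj.{u} L)} (hC : IsQMClass C) {H : QMObj.{u} L}
    (hH : H ∈ C) {X : Set H.carrier} (hX : X.Countable) : (H.cl X).Countable := by
  have hs : H.cl X ⊆ ⋃ F ∈ {F : Set H.carrier | F.Finite ∧ F ⊆ X}, H.cl F := by
    intro y hy
    obtain ⟨F, hF, hyF⟩ := (hC.pregeom H hH).finChar X y hy
    exact mem_biUnion (show (F : Set H.carrier) ∈ {F : Set H.carrier | F.Finite ∧ F ⊆ X} from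
      ⟨F.finite_toSet, hF⟩) hyF
  refine Set.Countable.mono hs (Set.Countable.biUnion (Set.countable_setOf_finite_subset hX) ?_)
  intro F hF
  exact hC.cl_finite_countable H hH F hF.1

theorem CCOE.countable {H : QMObj.{u} L} {G : Set H.carrier} (h : CCOE H G) : G.Countable := by
  rcases h with h | h
  · exact h.1
  · rw [h]; exact countable_empty

/-- Finite approximations to the desired isomorphism. -/
structure IsState {H H' : QMObj.{u} L} (g f s : Set (H.carrier × H'.carrier)) : Prop where
  sub : f ⊆ s
  fin : s.Finite
  emb : IsPartialEmbedding (L := L) (g ∪ s)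
  dom : pdom s ⊆ H.cl (pdom f ∪ pdom g)
  img : pimg s ⊆ H'.cl (pimg f ∪ pimg g)

theorem pinv_union {H : Type*} {H' : Type*} (p q : Set (H × H')) :
    pinv (p ∪ q) = pinv p ∪ pinv q := rfl

theorem IsState.pinv {H H' : QMObj.{u} L} {g f s : Set (H.carrier × H'.carrier)}
    (h : IsState g f s) : IsState (pinv g) (pinv f) (pinv s) where
  sub := fun _ hx => h.sub hx
  fin := h.fin.preimage Prod.swap_injective.injOn
  emb := h.emb.pinv
  dom := by simpa only [pdom_pinv] using h.img
  img := by simpa only [pimg_pinv] using h.dom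

theorem IsState.forth {C : Set (QMObj.{u} L)} (hC : IsQMClass C) {H H' : QMObj.{u} L}
    (hH : H ∈ C) (hH' : H' ∈ C) {g f s : Set (H.carrier × H'.carrier)}
    (hG : CCOE H (pdom g)) (hG' : CCOE H' (pimg g)) (hg : IsPartialEmbedding (L := L) g)
    (h : IsState g f s) {y : H.carrier} (hy : y ∈ H.cl (pdom f ∪ pdom g)) :
    ∃ t, IsState g f t ∧ s ⊆ t ∧ y ∈ pdom t := by
  have hy2 : y ∈ H.cl (pdom s ∪ pdom g) :=
    (hC.pregeom H hH).mono (union_subset_union_left _ (image_mono h.sub)) hy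
  obtain ⟨y', hy'⟩ := hC.homogeneity₂ H hH H' hH' g s hG hG' hg (h.fin.image _) h.emb y hy2
  have h3 : y' ∈ H'.cl (pimg (g ∪ s)) :=
    mem_cl_of_ext hC hH hH' hy' (by rwa [pdom_union, union_comm])
  have P' := hC.pregeom H' hH'
  have h4 : y' ∈ H'.cl (pimg f ∪ pimg g) := by
    rw [← P'.idem]
    refine P'.mono ?_ h3
    rw [pimg_union]
    exact union_subset (subset_union_right.trans (P'.subset_cl _)) h.img
  refine ⟨s ∪ {(y, y')}, ⟨h.sub.trans subset_union_left, h.fin.union (finite_singleton _),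
    by rwa [← union_assoc], ?_, ?_⟩, subset_union_left, ⟨(y, y'), Or.inr rfl, rfl⟩⟩
  · rw [pdom_union]
    refine union_subset h.dom ?_
    rintro _ ⟨_, rfl, rfl⟩
    exact hy
  · rw [pimg_union]
    refine union_subset h.img ?_
    rintro _ ⟨_, rfl, rfl⟩
    exact h4

theorem IsState.back {C : Set (QMObj.{u} L)} (hC : IsQMClass C) {H H' : QMObj.{u} L}
    (hH : H ∈ C) (hH' : H' ∈ C) {g f s : Set (H.carrier × H'.carrier)}
    (hG : CCOE H (pdom g)) (hG' : CCOE H' (pimg g)) (hg : IsPartialEmbedding (L := L) g)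
    (h : IsState g f s) {y : H'.carrier} (hy : y ∈ H'.cl (pimg f ∪ pimg g)) :
    ∃ t, IsState g f t ∧ s ⊆ t ∧ y ∈ pimg t := by
  obtain ⟨t, ht, hst, hyt⟩ := IsState.forth hC hH' hH (g := QM.pinv g) (f := QM.pinv f)
    (by rwa [pdom_pinv]) (by rwa [pimg_pinv]) hg.pinv h.pinv (y := y)
    (by rwa [pdom_pinv, pdom_pinv])
  exact ⟨QM.pinv t, ht.pinv, fun x hx => hst (show x.swap ∈ QM.pinv s from hx),
    by rwa [pimg_pinv]⟩

/-- Given `H, H' ∈ C`, countable closed or empty `G ⊆ H`, `G' ⊆ H'`, an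
isomorphism `g : G → G'` and a partial embedding `g ∪ f` with `X = dom f`, `X' = img f`
finite, the map `g ∪ f` extends to an isomorphism `ĝ : cl(X ∪ G) → cl(X' ∪ G')`. -/
theorem statement_1 {L : FirstOrder.Language.{v, w}} (C : Set (QMObj.{u} L))
    (hC : IsQMClass C) (H : QMObj.{u} L) (hH : H ∈ C) (H' : QMObj.{u} L) (hH' : H' ∈ C)
    (g f : Set (H.carrier × H'.carrier))
    (hG : CCOE H (pdom g)) (hG' : CCOE H' (pimg g))
    (hg : IsPartialEmbedding (L := L) g)
    (hgf : IsPartialEmbedding (L := L) (g ∪ f))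
    (hXfin : (pdom f).Finite) (hX'fin : (pimg f).Finite) :
    ∃ ghat : Set (H.carrier × H'.carrier), g ∪ f ⊆ ghat ∧
      IsPartialEmbedding (L := L) ghat ∧
      pdom ghat = H.cl (pdom f ∪ pdom g) ∧ pimg ghat = H'.cl (pimg f ∪ pimg g) := by
  have hffin : f.Finite := (hXfin.prod hX'fin).subset
    (fun x hx => ⟨⟨x, hx, rfl⟩, ⟨x, hx, rfl⟩⟩)
  have P := hC.pregeom H hH
  have P' := hC.pregeom H' hH'
  have s0 : IsState g f f := ⟨Subset.rfl, hffin, hgf,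
    subset_union_left.trans (P.subset_cl _), subset_union_left.trans (P'.subset_cl _)⟩
  have cA : (H.cl (pdom f ∪ pdom g)).Countable :=
    cl_countable hC hH (hXfin.countable.union hG.countable)
  have cB : (H'.cl (pimg f ∪ pimg g)).Countable :=
    cl_countable hC hH' (hX'fin.countable.union hG'.countable)
  have := cA.to_subtype
  have := cB.to_subtype
  let S := {s : Set (H.carrier × H'.carrier) // IsState g f s}
  let D : ↥(H.cl (pdom f ∪ pdom g)) ⊕ ↥(H'.cl (pimg f ∪ pimg g)) → Order.Cofinal S :=
    fun z => match z with
    | .inl y => ⟨{s : S | (y : H.carrier) ∈ pdom s.1}, fun s => by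
        obtain ⟨t, ht, hst, hy⟩ := s.2.forth hC hH hH' hG hG' hg y.2
        exact ⟨⟨t, ht⟩, hy, hst⟩⟩
    | .inr y => ⟨{s : S | (y : H'.carrier) ∈ pimg s.1}, fun s => by
        obtain ⟨t, ht, hst, hy⟩ := s.2.back hC hH hH' hG hG' hg y.2
        exact ⟨⟨t, ht⟩, hy, hst⟩⟩
  have := Encodable.ofCountable (↥(H.cl (pdom f ∪ pdom g)) ⊕ ↥(H'.cl (pimg f ∪ pimg g)))
  let I := Order.idealOfCofinals (⟨f, s0⟩ : S) D
  have hI0 : (⟨f, s0⟩ : S) ∈ I := Order.mem_idealOfCofinals _ _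
  have hID := Order.cofinal_meets_idealOfCofinals (⟨f, s0⟩ : S) D
  have key : ∀ (n : ℕ) (c : Fin n → H.carrier × H'.carrier),
      (∀ i, c i ∈ g ∪ ⋃ s ∈ I, (s : S).1) → ∃ s ∈ I, ∀ i, c i ∈ g ∪ (s : S).1 := by
    intro n
    induction n with
    | zero => intro c _; exact ⟨_, hI0, fun i => i.elim0⟩
    | succ n ih =>
      intro c hc
      obtain ⟨s, hs, h1⟩ := ih (fun i => c i.succ) (fun i => hc i.succ)
      have h2 : ∃ t ∈ I, c 0 ∈ g ∪ (t : S).1 := by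
        rcases hc 0 with h | h
        · exact ⟨_, hI0, Or.inl h⟩
        · simp only [mem_iUnion] at h
          obtain ⟨t, ht, h⟩ := h
          exact ⟨t, ht, Or.inr h⟩
      obtain ⟨t, ht, h2⟩ := h2
      obtain ⟨r, hr, hsr, htr⟩ := I.directed s hs t ht
      refine ⟨r, hr, fun i => ?_⟩
      refine Fin.cases ?_ (fun i => ?_) i
      · exact union_subset_union_right g (show t.1 ⊆ r.1 from htr) h2
      · exact union_subset_union_right g (show s.1 ⊆ r.1 from hsr) (h1 i)
  refine ⟨g ∪ ⋃ s ∈ I, (s : S).1, union_subset_union_right g ?_, ?_, ?_, ?_⟩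
  · exact fun x hx => mem_biUnion hI0 hx
  · intro n φ hφ a b hab
    obtain ⟨s, -, hs⟩ := key n (fun i => (a i, b i)) hab
    exact s.2.emb n φ hφ a b hs
  · apply Subset.antisymm
    · rintro _ ⟨x, hx | hx, rfl⟩
      · exact P.subset_cl _ (Or.inr ⟨x, hx, rfl⟩)
      · simp only [mem_iUnion] at hx
        obtain ⟨s, -, hx⟩ := hx
        exact s.2.dom ⟨x, hx, rfl⟩
    · intro y hy
      obtain ⟨s, ⟨x, hx, rfl⟩, hs⟩ := hID (.inl ⟨y, hy⟩)
      exact ⟨x, Or.inr (mem_biUnion hs hx), rfl⟩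
  · apply Subset.antisymm
    · rintro _ ⟨x, hx | hx, rfl⟩
      · exact P'.subset_cl _ (Or.inr ⟨x, hx, rfl⟩)
      · simp only [mem_iUnion] at hx
        obtain ⟨s, -, hx⟩ := hx
        exact s.2.img ⟨x, hx, rfl⟩
    · intro y hy
      obtain ⟨s, hsy, hs⟩ := hID (.inr ⟨y, hy⟩)
      obtain ⟨x, hx, hxy⟩ := hsy
      exact ⟨x, Or.inr (mem_biUnion hs hx), hxy⟩

end QM
end

section
/- Let C be a quasiminimal pregeometry class, H ∈ C uncountable, and X ⊆ H countable. Then for y ∈ H: y ∈ cl(X) if and only if y satisfies some L_{ω₁,ω}-formula φ(v) with parameters from X such that the set of solutions of φ in H is countable. -/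
open FirstOrder FirstOrder.Language Set Cardinal



universe u u' v w

namespace QM

variable {L : FirstOrder.Language.{v, w}}

section Aux

/-- A finite family of terms only mentions finitely many variables. -/
theorem terms_fin {β : Type*} {l : ℕ} (ts : Fin l → L.Term β) :
    ∃ (n : ℕ) (e : Fin n → β) (ts' : Fin l → L.Term (Fin n)),
      ∀ (M : Type u) [L.Structure M] (v : β → M) (j : Fin l),
        (ts' j).realize (v ∘ e) = (ts j).realize v := by
  classical
  let s : Finset β := Finset.univ.biUnion fun j => (ts j).varFinset
  let E := s.equivFin
  have hs : ∀ j, ∀ a ∈ (ts j).varFinset, a ∈ s := fun j a ha =>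
    Finset.mem_biUnion.2 ⟨j, Finset.mem_univ _, ha⟩
  refine ⟨s.card, fun i => (E.symm i : β),
    fun j => (ts j).restrictVar fun a => E ⟨a, hs j a a.2⟩, ?_⟩
  intro M _ v j
  apply Term.realize_restrictVar
  intro a
  simp

theorem IsPartialEmbedding.rel_iff {H H' : Type u} [L.Structure H] [L.Structure H']
    {p : Set (H × H')} (hp : IsPartialEmbedding (L := L) p) {β : Type*} {l : ℕ}
    (R : L.Relations l) (ts : Fin l → L.Term β) (v : β → H) (v' : β → H')
    (hv : ∀ b, (v b, v' b) ∈ p) :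
    Structure.RelMap R (fun i => (ts i).realize v) ↔
      Structure.RelMap R (fun i => (ts i).realize v') := by
  obtain ⟨n, e, ts', h⟩ := terms_fin.{u} ts
  have := hp n (R.formula ts') (BoundedFormula.IsAtomic.rel _ _).isQF (v ∘ e) (v' ∘ e)
    (fun i => hv _)
  simpa only [Formula.realize_rel, h] using this

theorem IsPartialEmbedding.eq_iff {H H' : Type u} [L.Structure H] [L.Structure H']
    {p : Set (H × H')} (hp : IsPartialEmbedding (L := L) p) {β : Type*}
    (t₁ t₂ : L.Term β) (v : β → H) (v' : β → H')
    (hv : ∀ b, (v b, v' b) ∈ p) :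
    t₁.realize v = t₂.realize v ↔ t₁.realize v' = t₂.realize v' := by
  obtain ⟨n, e, ts', h⟩ := terms_fin.{u} ![t₁, t₂]
  have := hp n (Term.equal (ts' 0) (ts' 1)) (BoundedFormula.IsAtomic.equal _ _).isQF
    (v ∘ e) (v' ∘ e) (fun i => hv _)
  simpa only [Formula.realize_equal, h, Matrix.cons_val_zero, Matrix.cons_val_one] using this

theorem IsPartialEmbedding.mono {H H' : Type u} [L.Structure H] [L.Structure H']
    {p q : Set (H × H')} (hq : IsPartialEmbedding (L := L) q) (h : p ⊆ q) :
    IsPartialEmbedding (L := L) p :=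
  fun n φ hφ a b hab => hq n φ hφ a b fun i => h (hab i)

theorem IsPartialEmbedding.swap {H H' : Type u} [L.Structure H] [L.Structure H']
    {p : Set (H × H')} (hp : IsPartialEmbedding (L := L) p) :
    IsPartialEmbedding (L := L) (Prod.swap ⁻¹' p) :=
  fun n φ hφ a b hab => (hp n φ hφ b a fun i => hab i).symm

theorem pdom_swap {H H' : Type*} (p : Set (H × H')) : pdom (Prod.swap ⁻¹' p) = pimg p := by
  ext x; simp [pdom, pimg]

theorem pimg_swap {H H' : Type*} (p : Set (H × H')) : pimg (Prod.swap ⁻¹' p) = pdom p := by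
  ext x; simp [pdom, pimg]

/-- One step of the back-and-forth inside closures. -/
theorem step {C : Set (QMObj.{u} L)} (hC : IsQMClass C) {H : QMObj.{u} L} (hH : H ∈ C)
    {g f : Set (H.carrier × H.carrier)} (h1 : CCOE H (pdom g)) (h2 : CCOE H (pimg g))
    (hf : f.Finite) (hgf : IsPartialEmbedding (L := L) (g ∪ f))
    (y : H.carrier) (hy : y ∈ H.cl (pdom f ∪ pdom g)) :
    ∃ y' ∈ H.cl (pimg f ∪ pimg g), IsPartialEmbedding (L := L) (g ∪ f ∪ {(y, y')}) := by
  have P := hC.pregeom H hH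
  by_cases hyd : y ∈ pdom f ∪ pdom g
  · obtain ⟨y', hy'⟩ : ∃ y', (y, y') ∈ g ∪ f := by
      rcases hyd with ⟨⟨a, b⟩, h, rfl⟩ | ⟨⟨a, b⟩, h, rfl⟩
      · exact ⟨b, Or.inr h⟩
      · exact ⟨b, Or.inl h⟩
    refine ⟨y', P.subset_cl _ ?_, ?_⟩
    · rcases hy' with h | h
      · exact Or.inr ⟨_, h, rfl⟩
      · exact Or.inl ⟨_, h, rfl⟩
    · exact hgf.mono (Set.union_subset subset_rfl (by simpa using hy'))
  · obtain ⟨y', hy'⟩ := hC.homogeneity₂ H hH H hH g f h1 h2 (hgf.mono subset_union_left)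
      (hf.image _) hgf y hy
    refine ⟨y', ?_, hy'⟩
    have hX : pdom f ∪ pdom g ⊆ pdom (g ∪ f ∪ {(y, y')}) := by
      rintro x (⟨a, h, rfl⟩ | ⟨a, h, rfl⟩)
      · exact ⟨a, Or.inl (Or.inr h), rfl⟩
      · exact ⟨a, Or.inl (Or.inl h), rfl⟩
    have := (hC.cl_embedding H hH H hH _ hy' _ hX y y' (Or.inr rfl)).1 hy
    refine P.mono ?_ this
    rintro b ⟨a, ha, (h | h) | h⟩
    · exact Or.inr ⟨_, h, rfl⟩
    · exact Or.inl ⟨_, h, rfl⟩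
    · simp only [Set.mem_singleton_iff, Prod.mk.injEq] at h
      exact absurd (h.1 ▸ ha) hyd

theorem step' {C : Set (QMObj.{u} L)} (hC : IsQMClass C) {H : QMObj.{u} L} (hH : H ∈ C)
    {g f : Set (H.carrier × H.carrier)} (h1 : CCOE H (pdom g)) (h2 : CCOE H (pimg g))
    (hf : f.Finite) (hgf : IsPartialEmbedding (L := L) (g ∪ f))
    (y : H.carrier) (hy : y ∈ H.cl (pimg f ∪ pimg g)) :
    ∃ y' ∈ H.cl (pdom f ∪ pdom g), IsPartialEmbedding (L := L) (g ∪ f ∪ {(y', y)}) := by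
  obtain ⟨y', hy', h⟩ := step hC hH (g := Prod.swap ⁻¹' g) (f := Prod.swap ⁻¹' f)
    (by rwa [pdom_swap]) (by rwa [pimg_swap])
    (hf.preimage Prod.swap_injective.injOn) hgf.swap y (by rwa [pdom_swap, pdom_swap])
  rw [pimg_swap, pimg_swap] at hy'
  refine ⟨y', hy', h.swap.mono ?_⟩
  rintro ⟨a, b⟩ (h | h)
  · exact Or.inl h
  · right
    simp only [Set.mem_singleton_iff, Prod.mk.injEq] at h
    simp [h.1, h.2]

/-- Partial embeddings between countable closed sets. -/
structure Good (H : QMObj.{u} L) (q : Set (H.carrier × H.carrier)) : Prop where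
  pe : IsPartialEmbedding (L := L) q
  dc : (pdom q).Countable
  ic : (pimg q).Countable
  dcl : H.cl (pdom q) = pdom q
  icl : H.cl (pimg q) = pimg q

theorem Good.swap {H : QMObj.{u} L} {q : Set (H.carrier × H.carrier)} (h : Good H q) :
    Good H (Prod.swap ⁻¹' q) where
  pe := h.pe.swap
  dc := by rw [pdom_swap]; exact h.ic
  ic := by rw [pimg_swap]; exact h.dc
  dcl := by rw [pdom_swap]; exact h.icl
  icl := by rw [pimg_swap]; exact h.dcl

/-- Extension to closures. -/
theorem extend_cl {C : Set (QMObj.{u} L)} (hC : IsQMClass C) {H : QMObj.{u} L} (hH : H ∈ C)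
    {g f : Set (H.carrier × H.carrier)} (hg : Good H g)
    (hf : f.Finite) (hgf : IsPartialEmbedding (L := L) (g ∪ f)) :
    ∃ q, g ∪ f ⊆ q ∧ Good H q := by
  have P := hC.pregeom H hH
  set D := H.cl (pdom f ∪ pdom g) with hD
  set D' := H.cl (pimg f ∪ pimg g) with hD'
  have cD : D.Countable := cl_countable hC hH (Set.Countable.union (hf.image _).countable hg.dc)
  have cD' : D'.Countable := cl_countable hC hH (Set.Countable.union (hf.image _).countable hg.ic)
  have gD : pdom g ⊆ D := subset_union_right.trans (P.subset_cl _)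
  have gD' : pimg g ⊆ D' := subset_union_right.trans (P.subset_cl _)
  have fD : pdom f ⊆ D := subset_union_left.trans (P.subset_cl _)
  have fD' : pimg f ⊆ D' := subset_union_left.trans (P.subset_cl _)
  let Q := {k : Set (H.carrier × H.carrier) //
    f ⊆ k ∧ k.Finite ∧ IsPartialEmbedding (L := L) (g ∪ k) ∧ pdom k ⊆ D ∧ pimg k ⊆ D'}
  have h1 : CCOE H (pdom g) := Or.inl ⟨hg.dc, hg.dcl⟩
  have h2 : CCOE H (pimg g) := Or.inl ⟨hg.ic, hg.icl⟩
  have key : ∀ (k : Q) (y y' : H.carrier), y ∈ D → y' ∈ D' →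
      IsPartialEmbedding (L := L) (g ∪ k.1 ∪ {(y, y')}) →
      ∃ k' : Q, k ≤ k' ∧ (y, y') ∈ k'.1 := by
    rintro ⟨k, hk1, hk2, hk3, hk4, hk5⟩ y y' hy hy' hp
    refine ⟨⟨k ∪ {(y, y')}, hk1.trans subset_union_left, hk2.union (Set.finite_singleton _),
      by rwa [← Set.union_assoc], ?_, ?_⟩, subset_union_left, Or.inr rfl⟩
    · rw [pdom, Set.image_union, Set.image_singleton]
      exact Set.union_subset hk4 (by simpa using hy)
    · rw [pimg, Set.image_union, Set.image_singleton]
      exact Set.union_subset hk5 (by simpa using hy')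
  have sub1 : ∀ k : Q, H.cl (pdom k.1 ∪ pdom g) = D := by
    rintro ⟨k, hk1, hk2, hk3, hk4, hk5⟩
    apply subset_antisymm
    · exact (P.mono (Set.union_subset hk4 gD)).trans (P.idem _).le
    · exact P.mono (Set.union_subset_union_left _ (Set.image_mono hk1))
  have sub2 : ∀ k : Q, H.cl (pimg k.1 ∪ pimg g) = D' := by
    rintro ⟨k, hk1, hk2, hk3, hk4, hk5⟩
    apply subset_antisymm
    · exact (P.mono (Set.union_subset hk5 gD')).trans (P.idem _).le
    · exact P.mono (Set.union_subset_union_left _ (Set.image_mono hk1))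
  let 𝒟 : (D ⊕ D') → Order.Cofinal Q := Sum.elim
    (fun d => ⟨{k | (d : H.carrier) ∈ pdom k.1}, fun k => by
      obtain ⟨y', hy', h⟩ := step hC hH h1 h2 k.2.2.1 k.2.2.2.1 d (by rw [sub1]; exact d.2)
      rw [sub2] at hy'
      obtain ⟨k', hk, hk'⟩ := key k _ _ d.2 hy' h
      exact ⟨k', ⟨_, hk', rfl⟩, hk⟩⟩)
    (fun d => ⟨{k | (d : H.carrier) ∈ pimg k.1}, fun k => by
      obtain ⟨y', hy', h⟩ := step' hC hH h1 h2 k.2.2.1 k.2.2.2.1 d (by rw [sub2]; exact d.2)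
      rw [sub1] at hy'
      obtain ⟨k', hk, hk'⟩ := key k _ _ hy' d.2 h
      exact ⟨k', ⟨_, hk', rfl⟩, hk⟩⟩)
  have := cD.to_subtype
  have := cD'.to_subtype
  letI := Encodable.ofCountable (D ⊕ D')
  let k0 : Q := ⟨f, subset_rfl, hf, hgf, fD, fD'⟩
  let s : ℕ → Q := Order.sequenceOfCofinals k0 𝒟
  have hs : Monotone s := Order.sequenceOfCofinals.monotone k0 𝒟
  let q : Set (H.carrier × H.carrier) := ⋃ n, (g ∪ (s n).1)
  have hqd : pdom q = D := by
    apply subset_antisymm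
    · rintro _ ⟨a, ha, rfl⟩
      obtain ⟨n, h | h⟩ := Set.mem_iUnion.1 ha
      · exact gD ⟨a, h, rfl⟩
      · exact (s n).2.2.2.2.1 ⟨a, h, rfl⟩
    · intro d hd
      obtain ⟨a, ha, h⟩ := Order.sequenceOfCofinals.encode_mem k0 𝒟 (Sum.inl ⟨d, hd⟩)
      exact ⟨a, Set.mem_iUnion.2 ⟨_, Or.inr ha⟩, h⟩
  have hqi : pimg q = D' := by
    apply subset_antisymm
    · rintro _ ⟨a, ha, rfl⟩
      obtain ⟨n, h | h⟩ := Set.mem_iUnion.1 ha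
      · exact gD' ⟨a, h, rfl⟩
      · exact (s n).2.2.2.2.2 ⟨a, h, rfl⟩
    · intro d hd
      obtain ⟨a, ha, h⟩ := Order.sequenceOfCofinals.encode_mem k0 𝒟 (Sum.inr ⟨d, hd⟩)
      exact ⟨a, Set.mem_iUnion.2 ⟨_, Or.inr ha⟩, h⟩
  refine ⟨q, ?_, ?_, ?_, ?_, ?_, ?_⟩
  · exact fun a ha => Set.mem_iUnion.2 ⟨0, ha⟩
  · intro n φ hφ a b hab
    have : ∀ i, ∃ m, (a i, b i) ∈ g ∪ (s m).1 := fun i => Set.mem_iUnion.1 (hab i)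
    choose m hm using this
    refine (s (Finset.univ.sup m)).2.2.2.1 n φ hφ a b fun i => ?_
    exact Set.union_subset_union_right _
      (hs (Finset.le_sup (f := m) (Finset.mem_univ i))) (hm i)
  · rw [hqd]; exact cD
  · rw [hqi]; exact cD'
  · rw [hqd]; exact P.idem _
  · rw [hqi]; exact P.idem _

theorem exists_notMem {H : Type u} [Uncountable H] {S : Set H} (hS : S.Countable) :
    ∃ x, x ∉ S := by
  by_contra! h
  exact Set.not_countable_univ (hS.mono fun x _ => h x)

/-- The forth property of good maps. -/
theorem Good.forth {C : Set (QMObj.{u} L)} (hC : IsQMClass C) {H : QMObj.{u} L} (hH : H ∈ C)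
    [Uncountable H.carrier] {q : Set (H.carrier × H.carrier)} (hq : Good H q) (y : H.carrier) :
    ∃ y' q', q ⊆ q' ∧ (y, y') ∈ q' ∧ Good H q' := by
  by_cases hy : y ∈ pdom q
  · obtain ⟨⟨a, b⟩, h, rfl⟩ := hy
    exact ⟨b, q, subset_rfl, h, hq⟩
  · obtain ⟨y', hy'⟩ := exists_notMem hq.ic
    have := hC.homogeneity₁ H hH H hH q (Or.inl ⟨hq.dc, hq.dcl⟩) (Or.inl ⟨hq.ic, hq.icl⟩) hq.pe
      y y' (by rwa [hq.dcl]) (by rwa [hq.icl])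
    obtain ⟨q', h, hq'⟩ := extend_cl hC hH hq (Set.finite_singleton _) this
    exact ⟨y', q', subset_union_left.trans h, h (Or.inr rfl), hq'⟩

theorem Good.realize_iff {C : Set (QMObj.{u} L)} (hC : IsQMClass C) {H : QMObj.{u} L} (hH : H ∈ C)
    [Uncountable H.carrier] {α : Type*} {n : ℕ} (φ : InfFormula L α n) :
    ∀ {q : Set (H.carrier × H.carrier)} (_ : Good H q) (v v' : α → H.carrier)
      (xs xs' : Fin n → H.carrier) (_ : ∀ a, (v a, v' a) ∈ q) (_ : ∀ i, (xs i, xs' i) ∈ q),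
      φ.Realize v xs ↔ φ.Realize v' xs' := by
  induction φ with
  | falsum => intros; rfl
  | equal t₁ t₂ =>
    intro q hq v v' xs xs' hv hx
    exact hq.pe.eq_iff t₁ t₂ _ _ (by rintro (a | i); exacts [hv a, hx i])
  | rel R ts =>
    intro q hq v v' xs xs' hv hx
    exact hq.pe.rel_iff R ts _ _ (by rintro (a | i); exacts [hv a, hx i])
  | not φ ih =>
    intro q hq v v' xs xs' hv hx
    exact not_congr (ih hq v v' xs xs' hv hx)
  | iInf φ ih =>
    intro q hq v v' xs xs' hv hx
    exact forall_congr' fun i => ih i hq v v' xs xs' hv hx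
  | all φ ih =>
    intro q hq v v' xs xs' hv hx
    constructor
    · intro h y
      obtain ⟨x, q', hsub, hxy, hq'⟩ := hq.swap.forth hC hH y
      refine (ih hq'.swap v v' _ _ (fun a => hsub (hv a)) (fun i => ?_)).1 (h x)
      refine Fin.lastCases ?_ (fun i => ?_) i
      · simpa using hxy
      · simpa using hsub (show (xs' i, xs i) ∈ _ from hx i)
    · intro h x
      obtain ⟨y, q', hsub, hxy, hq'⟩ := hq.forth hC hH x
      refine (ih hq' v v' _ _ (fun a => hsub (hv a)) (fun i => ?_)).2 (h y)
      refine Fin.lastCases ?_ (fun i => ?_) i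
      · simpa using hxy
      · simpa using hsub (hx i)

/-- First-order formulas are `L_{ω₁,ω}`-formulas. -/
theorem exists_inf {α : Type*} {n : ℕ} (φ : L.BoundedFormula α n) :
    ∃ ψ : InfFormula L α n, ∀ (M : Type u) [L.Structure M] (v : α → M) (xs : Fin n → M),
      ψ.Realize v xs ↔ φ.Realize v xs := by
  induction φ with
  | falsum => exact ⟨.falsum, fun M _ v xs => Iff.rfl⟩
  | equal t₁ t₂ => exact ⟨.equal t₁ t₂, fun M _ v xs => Iff.rfl⟩
  | rel R ts => exact ⟨.rel R ts, fun M _ v xs => Iff.rfl⟩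
  | imp φ₁ φ₂ ih₁ ih₂ =>
    obtain ⟨ψ₁, h₁⟩ := ih₁
    obtain ⟨ψ₂, h₂⟩ := ih₂
    refine ⟨.not (.iInf fun i => if i = 0 then ψ₁ else .not ψ₂), fun M _ v xs => ?_⟩
    rw [BoundedFormula.realize_imp, ← h₁, ← h₂]
    simp only [InfFormula.Realize]
    constructor
    · intro h a
      by_contra hb
      refine h fun i => ?_
      split_ifs
      · exact a
      · exact hb
    · intro h h'
      have a := h' 0
      have b := h' 1
      simp only [if_true, one_ne_zero, if_false, InfFormula.Realize] at a b
      exact b (h a)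
  | all φ ih =>
    obtain ⟨ψ, h⟩ := ih
    exact ⟨.all ψ, fun M _ v xs => forall_congr' fun x => h M v _⟩

theorem good_id {C : Set (QMObj.{u} L)} (hC : IsQMClass C) {H : QMObj.{u} L} (hH : H ∈ C)
    {X : Set H.carrier} (hX : X.Countable) :
    Good H ((fun x => (x, x)) '' H.cl X) := by
  have e1 : pdom ((fun x => (x, x)) '' H.cl X) = H.cl X := by
    ext; simp [pdom]
  have e2 : pimg ((fun x => (x, x)) '' H.cl X) = H.cl X := by
    ext; simp [pimg]
  have hc := cl_countable hC hH hX
  have hi := (hC.pregeom H hH).idem X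
  refine ⟨?_, by rwa [e1], by rwa [e2], by rwa [e1], by rwa [e2]⟩
  intro n φ _ a b hab
  have : a = b := by
    ext i
    obtain ⟨x, _, hx⟩ := hab i
    simp only [Prod.mk.injEq] at hx
    rw [← hx.1, ← hx.2]
  rw [this]

theorem generic_pe {C : Set (QMObj.{u} L)} (hC : IsQMClass C) {H : QMObj.{u} L} (hH : H ∈ C)
    {X : Set H.carrier} (hX : X.Countable) {y z : H.carrier} (hy : y ∉ H.cl X)
    (hz : z ∉ H.cl X) :
    IsPartialEmbedding (L := L) ((fun x => (x, x)) '' H.cl X ∪ {(y, z)}) := by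
  have hq := good_id hC hH hX
  have e1 : pdom ((fun x => (x, x)) '' H.cl X) = H.cl X := by
    ext; simp [pdom]
  have e2 : pimg ((fun x => (x, x)) '' H.cl X) = H.cl X := by
    ext; simp [pimg]
  exact hC.homogeneity₁ H hH H hH _ (Or.inl ⟨hq.dc, hq.dcl⟩) (Or.inl ⟨hq.ic, hq.icl⟩) hq.pe
      y z (by rwa [hq.dcl, e1]) (by rwa [hq.icl, e2])

end Aux

/-- For `H ∈ C` uncountable and `X ⊆ H` countable: `y ∈ cl(X)` iff `y`
satisfies some `L_{ω₁,ω}`-formula with parameters from `X` having countably many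
solutions in `H`. -/
theorem statement_6 {L : FirstOrder.Language.{v, w}} (C : Set (QMObj.{u} L))
    (hC : IsQMClass C) (H : QMObj.{u} L) (hH : H ∈ C)
    (hunc : Uncountable H.carrier)
    (X : Set H.carrier) (hX : X.Countable) (y : H.carrier) :
    y ∈ H.cl X ↔ ∃ φ : InfFormula L (↥X ⊕ Fin 1) 0,
      φ.RealizeP (fun _ => y) ∧ {a : H.carrier | φ.RealizeP (fun _ => a)}.Countable := by
  have P := hC.pregeom H hH
  have hcl := cl_countable hC hH hX
  constructor
  · intro hy
    by_cases hyX : y ∈ X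
    · refine ⟨.equal (.var (Sum.inl (Sum.inr 0))) (.var (Sum.inl (Sum.inl ⟨y, hyX⟩))), ?_, ?_⟩
      · simp [InfFormula.RealizeP, InfFormula.Realize]
      · simp [InfFormula.RealizeP, InfFormula.Realize]
    obtain ⟨z, hz⟩ := exists_notMem hcl
    have hnot : ¬ IsPartialEmbedding (L := L) ((fun x => (x, x)) '' X ∪ {(y, z)}) := by
      intro hp
      have := (hC.cl_embedding H hH H hH _ hp X (fun x hx => ⟨(x, x), Or.inl ⟨x, hx, rfl⟩, rfl⟩)
        y z (Or.inr rfl)).1 hy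
      refine hz (P.mono ?_ this)
      rintro b ⟨a, ha, ⟨x, hx, h⟩ | h⟩
      · simp only [Prod.mk.injEq] at h
        exact h.2 ▸ hx
      · simp only [Set.mem_singleton_iff, Prod.mk.injEq] at h
        exact absurd (h.1 ▸ ha) hyX
    have : ∃ (n : ℕ) (φ : L.Formula (Fin n)), BoundedFormula.IsQF φ ∧
        ∃ (a b : Fin n → H.carrier), (∀ i, (a i, b i) ∈ (fun x => (x, x)) '' X ∪ {(y, z)}) ∧
          φ.Realize a ∧ ¬ φ.Realize b := by
      unfold IsPartialEmbedding at hnot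
      push Not at hnot
      obtain ⟨n, φ, hφ, a, b, hab, h | h⟩ := hnot
      · exact ⟨n, φ, hφ, a, b, hab, h⟩
      · exact ⟨n, φ.not, hφ.not, a, b, hab, by
          simpa [Formula.realize_not] using h⟩
    obtain ⟨n, φ, hφ, a, b, hab, ha, hb⟩ := this
    have : ∀ i, ∃ t : ↥X ⊕ Fin 1, Sum.elim Subtype.val (fun _ => y) t = a i ∧
        Sum.elim Subtype.val (fun _ => z) t = b i := by
      intro i
      rcases hab i with ⟨x, hx, h⟩ | h
      · simp only [Prod.mk.injEq] at h
        exact ⟨Sum.inl ⟨x, hx⟩, h⟩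
      · simp only [Set.mem_singleton_iff, Prod.mk.injEq] at h
        exact ⟨Sum.inr 0, h.1.symm, h.2.symm⟩
    choose t hta htb using this
    obtain ⟨ψ, hψ⟩ := exists_inf.{u} (φ.relabel t)
    have hψ' : ∀ c : H.carrier, ψ.RealizeP (fun _ => c) ↔
        φ.Realize (Sum.elim Subtype.val (fun _ => c) ∘ t) := by
      intro c
      rw [← Formula.realize_relabel, InfFormula.RealizeP, hψ, Formula.Realize]
      exact iff_of_eq (congrArg _ (Subsingleton.elim _ _))
    refine ⟨ψ, ?_, hcl.mono ?_⟩
    · rw [hψ']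
      convert ha using 1
      exact funext hta
    · intro c hc
      rw [Set.mem_ofPred_eq, hψ'] at hc
      by_contra hcX
      refine hb ?_
      refine (generic_pe hC hH hX hcX hz n φ hφ _ b fun i => ?_).1 hc
      rw [← htb i]
      simp only [Function.comp]
      rcases t i with x | j
      · exact Or.inl ⟨x, P.subset_cl _ x.2, rfl⟩
      · exact Or.inr rfl
  · rintro ⟨φ, hφ, hc⟩
    by_contra hy
    obtain ⟨z, hz⟩ := exists_notMem (hcl.union hc)
    simp only [Set.mem_union, not_or] at hz
    obtain ⟨q, hsub, hq⟩ := extend_cl hC hH (good_id hC hH hX) (Set.finite_singleton _)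
      (generic_pe hC hH hX hy hz.1)
    refine hz.2 ((hq.realize_iff hC hH φ _ _ _ _ ?_ ?_).1 hφ)
    · rintro (x | j)
      · exact hsub (Or.inl ⟨x, P.subset_cl _ x.2, rfl⟩)
      · exact hsub (Or.inr rfl)
    · exact fun i => i.elim0

end QM
end
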